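/- Let α and β be the images of α' and β' in the projective unitary group PU_n = U_n / Z(U_n). The subgroup V_n of PU_n generated by α and β is commutative and isomorphic to (ℤ/n) × (ℤ/n). -/

import Mathlib

/-!
The matrices satisfy `β' α' = ζ α' β'` and `α' ^ n = β' ^ n = 1` (`betaM_mul_alphaM`,
`alphaM_pow_self`, `betaM_pow_self`), and `ζ • 1` is central of order `n`. Hence the images of `α'`
and `β'` modulo the center commute and have exponent dividing `n`. They satisfy no further relation:
if `α' ^ i * β' ^ j` is central, comparing its products with `β'` and `α'` on either side gives
`ζ ^ i = 1` and `ζ ^ j = 1`, so `n` divides `i` and `j`. This is `closure_mod_center_iso`, valid in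
any group; only commutation with the two generators is used, so the center of `U_n` need not be
computed. Commutativity is then transported back along the isomorphism.
-/

open Matrix Complex

/-- `ζ = exp(2πi/n)`. -/
noncomputable def zetaC (n : ℕ) : ℂ := Complex.exp (2 * Real.pi * Complex.I / n)

/-- The cyclic permutation matrix `α'`, with `α'_{ij} = 1` iff `i ≡ j + 1 (mod n)`. -/
noncomputable def alphaM (n : ℕ) : Matrix (Fin n) (Fin n) ℂ :=
  fun i j => if (i : ℕ) = ((j : ℕ) + 1) % n then 1 else 0

/-- The diagonal matrix `β' = diag(ζ, ζ², …, ζ^{n−1}, 1)`. -/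
noncomputable def betaM (n : ℕ) : Matrix (Fin n) (Fin n) ℂ :=
  Matrix.diagonal fun i => zetaC n ^ ((i : ℕ) + 1)

/-- `α'` as an element of the unitary group. -/
noncomputable def aU (n : ℕ) (hA : alphaM n ∈ Matrix.unitaryGroup (Fin n) ℂ) :
    Matrix.unitaryGroup (Fin n) ℂ := ⟨alphaM n, hA⟩

/-- `β'` as an element of the unitary group. -/
noncomputable def bU (n : ℕ) (hB : betaM n ∈ Matrix.unitaryGroup (Fin n) ℂ) :
    Matrix.unitaryGroup (Fin n) ℂ := ⟨betaM n, hB⟩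

/-- The scalar matrix `ζ·I` as an element of the unitary group. -/
noncomputable def sU (n : ℕ)
    (hS : zetaC n • (1 : Matrix (Fin n) (Fin n) ℂ) ∈ Matrix.unitaryGroup (Fin n) ℂ) :
    Matrix.unitaryGroup (Fin n) ℂ := ⟨zetaC n • (1 : Matrix (Fin n) (Fin n) ℂ), hS⟩

/-- `V_n'`, the subgroup of `U_n` generated by `α'` and `β'`. -/
noncomputable def Vgrp (n : ℕ) (hA : alphaM n ∈ Matrix.unitaryGroup (Fin n) ℂ)
    (hB : betaM n ∈ Matrix.unitaryGroup (Fin n) ℂ) :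
    Subgroup (Matrix.unitaryGroup (Fin n) ℂ) :=
  Subgroup.closure {aU n hA, bU n hB}

/-- `W_n`, the subgroup of `U_n` generated by `β'` and the scalar matrix `ζ·I`. -/
noncomputable def Wgrp (n : ℕ) (hB : betaM n ∈ Matrix.unitaryGroup (Fin n) ℂ)
    (hS : zetaC n • (1 : Matrix (Fin n) (Fin n) ℂ) ∈ Matrix.unitaryGroup (Fin n) ℂ) :
    Subgroup (Matrix.unitaryGroup (Fin n) ℂ) :=
  Subgroup.closure {bU n hB, sU n hS}

/-- Two commuting elements `x`, `y` of exponent dividing `n`, with no relation `x ^ i * y ^ j = 1`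
besides the trivial ones modulo `n`, generate a copy of `(ℤ/n) × (ℤ/n)`. -/
theorem closure_pair_iso {Q : Type*} [Group Q] (n : ℕ) (hn : 1 < n) (x y : Q)
    (hxy : Commute x y) (hx : x ^ n = 1) (hy : y ^ n = 1)
    (hfree : ∀ i j : ℕ, x ^ i * y ^ j = 1 → n ∣ i ∧ n ∣ j) :
    Nonempty (Subgroup.closure {x, y} ≃* Multiplicative (ZMod n × ZMod n)) := by
  have : NeZero n := ⟨by omega⟩
  have : Fact (1 < n) := ⟨hn⟩
  let φ : Multiplicative (ZMod n × ZMod n) →* Q :=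
    { toFun := fun p => x ^ p.toAdd.1.val * y ^ p.toAdd.2.val
      map_one' := by simp
      map_mul' := by
        intro p q
        simp only [toAdd_mul, Prod.fst_add, Prod.snd_add, ZMod.val_add]
        rw [← pow_eq_pow_mod _ hx, ← pow_eq_pow_mod _ hy, pow_add, pow_add,
          mul_assoc, mul_assoc, ← mul_assoc (x ^ q.toAdd.1.val),
          (hxy.pow_pow q.toAdd.1.val p.toAdd.2.val).eq, mul_assoc] }
  have hφ : ∀ p, φ p = x ^ p.toAdd.1.val * y ^ p.toAdd.2.val := fun _ => rfl
  have hinj : Function.Injective φ := by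
    rw [injective_iff_map_eq_one]
    intro p hp
    obtain ⟨h1, h2⟩ := hfree _ _ hp
    have e1 := Nat.eq_zero_of_dvd_of_lt h1 (ZMod.val_lt _)
    have e2 := Nat.eq_zero_of_dvd_of_lt h2 (ZMod.val_lt _)
    rw [ZMod.val_eq_zero] at e1 e2
    exact Multiplicative.toAdd.injective (Prod.ext e1 e2)
  have hrange : φ.range = Subgroup.closure {x, y} := by
    apply le_antisymm
    · rintro _ ⟨p, rfl⟩
      rw [hφ]
      exact mul_mem (pow_mem (Subgroup.subset_closure (by simp)) _)
        (pow_mem (Subgroup.subset_closure (by simp)) _)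
    · rw [Subgroup.closure_le]
      rintro z (rfl | rfl)
      · exact ⟨Multiplicative.ofAdd (1, 0), by simp [hφ, ZMod.val_one]⟩
      · exact ⟨Multiplicative.ofAdd (0, 1), by simp [hφ, ZMod.val_one]⟩
  exact ⟨((MonoidHom.ofInjective hinj).trans (MulEquiv.subgroupCongr hrange)).symm⟩

/-- If `b * a = z * (a * b)` with `z` central of order `n` and `a ^ n = b ^ n = 1`, then the images
of `a` and `b` modulo the center generate a copy of `(ℤ/n) × (ℤ/n)`. A central word `a ^ i * b ^ j`
commutes with `b`, forcing `z ^ i = 1`, and with `a`, forcing `z ^ j = 1`. -/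
theorem closure_mod_center_iso {G : Type*} [Group G] (n : ℕ) (hn : 1 < n) (a b z : G)
    (hz : z ∈ Subgroup.center G) (hord : orderOf z = n) (hba : b * a = z * (a * b))
    (ha : a ^ n = 1) (hb : b ^ n = 1) :
    Nonempty (Subgroup.closure {QuotientGroup.mk' (Subgroup.center G) a,
      QuotientGroup.mk' (Subgroup.center G) b} ≃* Multiplicative (ZMod n × ZMod n)) := by
  have hzc : ∀ g, g * z = z * g := Subgroup.mem_center_iff.1 hz
  have hzp : ∀ (k : ℕ) g, g * z ^ k = z ^ k * g := fun k =>
    Subgroup.mem_center_iff.1 (pow_mem hz k)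
  have hbai : ∀ i : ℕ, b * a ^ i = z ^ i * (a ^ i * b) := by
    intro i
    induction i with
    | zero => simp
    | succ i ih =>
      calc b * a ^ (i + 1) = b * a ^ i * a := by rw [pow_succ, mul_assoc]
        _ = z ^ i * a ^ i * (b * a) := by rw [ih]; simp only [mul_assoc]
        _ = z ^ i * (a ^ i * z) * (a * b) := by rw [hba]; simp only [mul_assoc]
        _ = z ^ (i + 1) * (a ^ (i + 1) * b) := by
          rw [hzc]; simp only [pow_succ, mul_assoc]
  have hbja : ∀ j : ℕ, b ^ j * a = z ^ j * (a * b ^ j) := by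
    intro j
    induction j with
    | zero => simp
    | succ j ih =>
      calc b ^ (j + 1) * a = b * (b ^ j * a) := by rw [pow_succ', mul_assoc]
        _ = b * z ^ j * (a * b ^ j) := by rw [ih]; simp only [mul_assoc]
        _ = z ^ j * (b * a) * b ^ j := by rw [hzp]; simp only [mul_assoc]
        _ = z ^ (j + 1) * (a * b ^ (j + 1)) := by
          rw [hba, pow_succ z, pow_succ' b]; simp only [mul_assoc]
  apply closure_pair_iso n hn
  · rw [commute_iff_eq, ← map_mul, ← map_mul, hba, map_mul _ z]
    have : QuotientGroup.mk' (Subgroup.center G) z = 1 := (QuotientGroup.eq_one_iff z).2 hz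
    rw [this, one_mul]
  · rw [← map_pow, ha, map_one]
  · rw [← map_pow, hb, map_one]
  · intro i j h
    rw [← map_pow, ← map_pow, ← map_mul] at h
    have hc : ∀ g, g * (a ^ i * b ^ j) = (a ^ i * b ^ j) * g :=
      Subgroup.mem_center_iff.1 ((QuotientGroup.eq_one_iff _).1 h)
    constructor
    · rw [← hord, orderOf_dvd_iff_pow_eq_one]
      have h1 : z ^ i * (a ^ i * b ^ j * b) = 1 * (a ^ i * b ^ j * b) := by
        rw [one_mul]
        nth_rewrite 2 [← hc b]
        rw [← mul_assoc b, hbai, mul_assoc, mul_assoc, mul_assoc, ← pow_succ, ← pow_succ']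
      exact mul_right_cancel h1
    · rw [← hord, orderOf_dvd_iff_pow_eq_one]
      have h1 : z ^ j * (a * (a ^ i * b ^ j)) = 1 * (a * (a ^ i * b ^ j)) := by
        rw [one_mul]
        nth_rewrite 2 [hc a]
        rw [mul_assoc, hbja, ← mul_assoc (a ^ i), hzp, mul_assoc, ← mul_assoc a, ← mul_assoc (a ^ i),
          ← pow_succ, ← pow_succ']
      exact mul_right_cancel h1

theorem zetaC_primitive (n : ℕ) (hn : 1 < n) : IsPrimitiveRoot (zetaC n) n :=
  Complex.isPrimitiveRoot_exp n (by omega)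

theorem zetaC_star_mul (n : ℕ) (hn : 1 < n) : star (zetaC n) * zetaC n = 1 := by
  have h : ‖zetaC n‖ = 1 := (zetaC_primitive n hn).norm'_eq_one (by omega)
  have := Complex.conj_mul' (zetaC n)
  rw [h] at this
  simpa using this

theorem zeta_smul_mem (n : ℕ) (hn : 1 < n) :
    zetaC n • (1 : Matrix (Fin n) (Fin n) ℂ) ∈ Matrix.unitaryGroup (Fin n) ℂ := by
  rw [Matrix.mem_unitaryGroup_iff', star_smul, star_one, smul_mul_smul_comm, zetaC_star_mul n hn,
    one_mul, one_smul]

theorem betaM_mul_alphaM (n : ℕ) (hn : 1 < n) :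
    betaM n * alphaM n = zetaC n • (alphaM n * betaM n) := by
  ext i j
  rw [Matrix.smul_apply, betaM, Matrix.diagonal_mul, Matrix.mul_diagonal, alphaM]
  -- where the entry is nonzero, `i ≡ j + 1 (mod n)`, and `ζ ^ k` depends only on `k` modulo `n`
  split_ifs with h
  · have : zetaC n ^ (i : ℕ) = zetaC n ^ ((j : ℕ) + 1) := by
      rw [h, ← pow_eq_pow_mod _ (zetaC_primitive n hn).pow_eq_one]
    rw [pow_succ, this, smul_eq_mul]
    ring
  · simp

theorem alphaM_pow_apply (n : ℕ) (k : ℕ) (i j : Fin n) :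
    (alphaM n ^ k) i j = if (i : ℕ) = ((j : ℕ) + k) % n then 1 else 0 := by
  induction k generalizing i j with
  | zero => simp [Matrix.one_apply, Fin.ext_iff, Nat.mod_eq_of_lt j.2]
  | succ k ih =>
    have hpos : 0 < n := by have := j.2; omega
    rw [pow_succ, Matrix.mul_apply,
      Finset.sum_eq_single (⟨((j : ℕ) + 1) % n, Nat.mod_lt _ hpos⟩ : Fin n)]
    · rw [ih]
      simp [alphaM, add_assoc, add_comm 1 k]
    · intro l _ hl
      have : (l : ℕ) ≠ ((j : ℕ) + 1) % n := fun h => hl (Fin.ext h)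
      simp [alphaM, this]
    · simp

theorem alphaM_pow_self (n : ℕ) : alphaM n ^ n = 1 := by
  ext i j
  rw [alphaM_pow_apply, Matrix.one_apply, Nat.add_mod_right, Nat.mod_eq_of_lt j.2]
  simp [Fin.ext_iff]

theorem betaM_pow_self (n : ℕ) (hn : 1 < n) : betaM n ^ n = 1 := by
  rw [betaM, Matrix.diagonal_pow, ← Matrix.diagonal_one]
  congr 1
  ext i
  simp [← pow_mul, mul_comm _ n, pow_mul _ n, (zetaC_primitive n hn).pow_eq_one]

theorem sU_mem_center (n : ℕ) (hS : zetaC n • (1 : Matrix (Fin n) (Fin n) ℂ) ∈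
    Matrix.unitaryGroup (Fin n) ℂ) : sU n hS ∈ Subgroup.center _ := by
  rw [Subgroup.mem_center_iff]
  intro g
  apply Subtype.ext
  simp [sU]

theorem orderOf_sU (n : ℕ) (hn : 1 < n) (hS : zetaC n • (1 : Matrix (Fin n) (Fin n) ℂ) ∈
    Matrix.unitaryGroup (Fin n) ℂ) : orderOf (sU n hS) = n := by
  have : NeZero n := ⟨by omega⟩
  refine Eq.trans ?_ (zetaC_primitive n hn).eq_orderOf.symm
  apply orderOf_eq_orderOf_iff.2
  intro k
  rw [Subtype.ext_iff, SubmonoidClass.coe_pow]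
  simp only [sU, smul_pow, one_pow, OneMemClass.coe_one]
  constructor
  · intro h
    simpa using congrFun (congrFun h 0) 0
  · intro h
    rw [h, one_smul]

/-- the subgroup `V_n` of `PU_n` generated by the images `α`, `β` of `α'`, `β'`
is commutative and isomorphic to `(ℤ/n) × (ℤ/n)`. -/
theorem Vbar_comm_and_iso (n : ℕ) (hn : 1 < n)
    (hA : alphaM n ∈ Matrix.unitaryGroup (Fin n) ℂ)
    (hB : betaM n ∈ Matrix.unitaryGroup (Fin n) ℂ) :
    (∀ x ∈ Subgroup.closure
        {QuotientGroup.mk' (Subgroup.center (Matrix.unitaryGroup (Fin n) ℂ)) (aU n hA),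
         QuotientGroup.mk' (Subgroup.center (Matrix.unitaryGroup (Fin n) ℂ)) (bU n hB)},
      ∀ y ∈ Subgroup.closure
        {QuotientGroup.mk' (Subgroup.center (Matrix.unitaryGroup (Fin n) ℂ)) (aU n hA),
         QuotientGroup.mk' (Subgroup.center (Matrix.unitaryGroup (Fin n) ℂ)) (bU n hB)},
      x * y = y * x) ∧
    Nonempty ((Subgroup.closure
        {QuotientGroup.mk' (Subgroup.center (Matrix.unitaryGroup (Fin n) ℂ)) (aU n hA),
         QuotientGroup.mk' (Subgroup.center (Matrix.unitaryGroup (Fin n) ℂ)) (bU n hB)}) ≃*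
      Multiplicative (ZMod n × ZMod n)) := by
  have hS := zeta_smul_mem n hn
  obtain ⟨e⟩ := closure_mod_center_iso n hn (aU n hA) (bU n hB) (sU n hS)
    (sU_mem_center n hS) (orderOf_sU n hn hS)
    (Subtype.ext (by simpa [aU, bU, sU] using betaM_mul_alphaM n hn))
    (Subtype.ext (by simpa [aU] using alphaM_pow_self n))
    (Subtype.ext (by simpa [bU] using betaM_pow_self n hn))
  refine ⟨fun x hx y hy => ?_, ⟨e⟩⟩
  have h : (⟨x, hx⟩ : Subgroup.closure _) * ⟨y, hy⟩ = ⟨y, hy⟩ * ⟨x, hx⟩ :=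
    e.injective (by rw [map_mul, map_mul, mul_comm])
  exact congrArg Subtype.val h
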